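/- arXiv:2410.12139 — 6 statements merged into one kernel-verified Lean document; each statement's English description precedes it below -/
import Mathlib

section
/- Let n ≥ 1, let w ∈ ℝ^n satisfy w_1 ≥ w_2 ≥ … ≥ w_n ≥ 0, and let d ∈ ℝ^n have nonnegative entries. Then the minimum of ∑_{i=1}^n r_i + ∑_{j=1}^n c_j over all r, c ∈ ℝ^n with nonnegative entries satisfying r_i + c_j ≥ w_i d_j for all i, j ∈ {1,…,n} equals max_π ∑_{i=1}^n w_i d_{π(i)}, where the maximum is over all permutations π of {1,…,n}. -/
open Finset

/-!
Weak duality: summing `w i * d (π i) ≤ r i + c (π i)` over `i` bounds every assignment value by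
every dual objective value. So it suffices to exhibit one permutation and one feasible pair `(r, c)`
with equal values. Take `π` sorting `d` in decreasing order and put `e = d ∘ π`. The pair
`r i = ∑_{k ≥ i} e k * (w k - w (k+1))`, `c j = ∑_{k ≥ j} w (k+1) * (e k - e (k+1))`
(with `w`, `e` zero past the end) is feasible for `(w, e)` and telescopes to
`r i + c i = w i * e i`; `exists_tight_dual` builds it by induction on the length.
-/

/-- For two decreasing nonnegative sequences there is a dual feasible pair which is tight on the
diagonal, that is, satisfies complementary slackness with the identity permutation. -/
lemma exists_tight_dual (m : ℕ) : ∀ w e : Fin (m + 1) → ℝ, Antitone w → Antitone e →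
    (∀ i, 0 ≤ w i) → (∀ i, 0 ≤ e i) →
    ∃ r c : Fin (m + 1) → ℝ, (∀ i, 0 ≤ r i) ∧ (∀ j, 0 ≤ c j) ∧
      (∀ i j, w i * e j ≤ r i + c j) ∧ ∀ i, r i + c i = w i * e i := by
  induction m with
  | zero =>
    intro w e _ _ hw he
    refine ⟨fun i => w i * e i, fun _ => 0, fun i => mul_nonneg (hw i) (he i), fun _ => le_rfl,
      fun i j => ?_, fun i => add_zero _⟩
    rw [show j = i by omega, add_zero]
  | succ m ih =>
    intro w e hwa hea hw he
    obtain ⟨r, c, hr, hc, hrc, heq⟩ := ih (fun i => w i.succ) (fun i => e i.succ)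
      (fun i j h => hwa (Fin.succ_le_succ_iff.2 h)) (fun i j h => hea (Fin.succ_le_succ_iff.2 h))
      (fun i => hw _) (fun i => he _)
    have hw1 : w (Fin.succ 0) ≤ w 0 := hwa (Fin.zero_le _)
    have he1 : e (Fin.succ 0) ≤ e 0 := hea (Fin.zero_le _)
    -- The new first entries extend those of the tail by one term of each telescoping sum.
    refine ⟨Fin.cons (r 0 + e 0 * (w 0 - w (Fin.succ 0))) r,
      Fin.cons (c 0 + w (Fin.succ 0) * (e 0 - e (Fin.succ 0))) c, ?_, ?_, ?_, ?_⟩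
    · refine Fin.cases ?_ fun i => ?_
      · exact add_nonneg (hr 0) (mul_nonneg (he 0) (sub_nonneg.2 hw1))
      · exact hr i
    · refine Fin.cases ?_ fun i => ?_
      · exact add_nonneg (hc 0) (mul_nonneg (hw _) (sub_nonneg.2 he1))
      · exact hc i
    · refine Fin.cases (Fin.cases ?_ fun j => ?_) fun i => Fin.cases ?_ fun j => ?_
      · simp only [Fin.cons_zero]
        linarith [heq 0]
      · simp only [Fin.cons_zero, Fin.cons_succ]
        have h := mul_le_mul_of_nonneg_right (hea (Fin.zero_le j.succ)) (sub_nonneg.2 hw1)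
        linarith [hrc 0 j]
      · simp only [Fin.cons_zero, Fin.cons_succ]
        have h := mul_le_mul_of_nonneg_right
          (hwa (Fin.succ_le_succ_iff.2 (Fin.zero_le i))) (sub_nonneg.2 he1)
        linarith [hrc i 0]
      · exact hrc i j
    · refine Fin.cases ?_ fun i => ?_
      · simp only [Fin.cons_zero]
        linarith [heq 0]
      · exact heq i

theorem stmt4 (n : ℕ) (hn : 1 ≤ n) (w d : Fin n → ℝ)
    (hwmono : ∀ i j : Fin n, i ≤ j → w j ≤ w i) (hw0 : ∀ i, 0 ≤ w i)
    (hd : ∀ i, 0 ≤ d i) :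
    ∃ v : ℝ,
      IsLeast {x : ℝ | ∃ r c : Fin n → ℝ, (∀ i, 0 ≤ r i) ∧ (∀ j, 0 ≤ c j) ∧
        (∀ i j, w i * d j ≤ r i + c j) ∧ x = ∑ i, r i + ∑ j, c j} v ∧
      IsGreatest {x : ℝ | ∃ π : Equiv.Perm (Fin n), x = ∑ i, w i * d (π i)} v := by
  obtain ⟨m, rfl⟩ : ∃ m, n = m + 1 := ⟨n - 1, by omega⟩
  have weak : ∀ (r c : Fin (m + 1) → ℝ) (π : Equiv.Perm (Fin (m + 1))),
      (∀ i j, w i * d j ≤ r i + c j) → ∑ i, w i * d (π i) ≤ ∑ i, r i + ∑ j, c j := by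
    intro r c π h
    rw [← Equiv.sum_comp π c, ← Finset.sum_add_distrib]
    exact Finset.sum_le_sum fun i _ => h i (π i)
  obtain ⟨σ, hσ⟩ : ∃ σ : Equiv.Perm (Fin (m + 1)), Antitone (fun i => d (σ i)) :=
    ⟨Tuple.sort (fun i => -d i), fun i j h =>
      neg_le_neg_iff.1 (Tuple.monotone_sort (fun i => -d i) h)⟩
  obtain ⟨r, c, hr, hc, hrc, heq⟩ := exists_tight_dual m w (fun i => d (σ i))
    (fun i j h => hwmono i j h) hσ hw0 (fun i => hd _)
  -- The column multipliers were built for the sorted `d`; `σ.symm` undoes the sorting.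
  have hfeas : ∀ i j, w i * d j ≤ r i + c (σ.symm j) := fun i j => by
    simpa using hrc i (σ.symm j)
  have hval : ∑ i, w i * d (σ i) = ∑ i, r i + ∑ j, c (σ.symm j) := by
    rw [Equiv.sum_comp σ.symm c, ← Finset.sum_add_distrib]
    exact Finset.sum_congr rfl fun i _ => (heq i).symm
  refine ⟨∑ i, w i * d (σ i), ⟨⟨r, fun j => c (σ.symm j), hr, fun j => hc _, hfeas, hval⟩, ?_⟩,
    ⟨σ, rfl⟩, ?_⟩
  · rintro x ⟨r', c', -, -, h, rfl⟩
    exact weak r' c' σ h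
  · rintro x ⟨π, rfl⟩
    rw [hval]
    exact weak r _ π hfeas
end

section
/- Let n ≥ 2, let a, b ∈ ℝ^n, let w ∈ ℝ^n satisfy w_1 > w_2 > … > w_n > 0, and let p, q > 0. Suppose at most one unordered pair {s,t} with s ≠ t satisfies p·a_s + q·b_s = p·a_t + q·b_t. Let M = {π : cs_w(pa+qb, π) = cs*_w(pa+qb)} be the set of permutations maximizing the cumulative score of pa+qb. Then either M consists of a single permutation, or M consists of exactly two permutations π_1, π_2 such that for some i ∈ {1,…,n−1}, π_2(i) = π_1(i+1), π_2(i+1) = π_1(i), and π_2(j) = π_1(j) for all j ∉ {i, i+1} (i.e., π_1 and π_2 differ by an adjacent transposition). -/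
/-!
Write `c = p a + q b`. By the equality case of the rearrangement inequality and strict
monotonicity of `w`, a permutation `τ` maximizes the score of `c` iff `c ∘ τ` is antitone, i.e. iff
`c ∘ τ = c ∘ π` for a fixed sorting permutation `π` (`exists_sort_maximizers`). If `c` is injective
this forces `τ = π`. Otherwise the unique tied pair occupies adjacent positions `x, x + 1` of `π`,
since an element placed strictly between would be tied as well, and `c ∘ τ = c ∘ π` leaves only `π`
and `π * swap x (x + 1)`.
-/

open Finset

/-- Cumulative score: `cs_w(a, π) = ∑_j w_j a_{π(j)}`. -/
def cs {n : ℕ} (w a : Fin n → ℝ) (π : Equiv.Perm (Fin n)) : ℝ :=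
  ∑ j, w j * a (π j)

/-- For strictly decreasing weights, the maximizers of the score of `c` are the permutations that
list the values of `c` in the same decreasing order as a fixed sorting permutation. -/
lemma exists_sort_maximizers {n : ℕ} (w c : Fin n → ℝ)
    (hw : ∀ i j : Fin n, i < j → w j < w i) :
    ∃ π : Equiv.Perm (Fin n), Antitone (c ∘ π) ∧
      ∀ τ : Equiv.Perm (Fin n), (∀ σ, cs w c σ ≤ cs w c τ) ↔ ∀ j, c (τ j) = c (π j) := by
  have hwa : StrictAnti w := fun i j h => hw i j h
  obtain ⟨π, hπ⟩ : ∃ π : Equiv.Perm (Fin n), π = Tuple.sort (fun j => -c j) := ⟨_, rfl⟩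
  have hanti : Antitone (c ∘ π) := by
    intro i j hij
    have := Tuple.monotone_sort (fun j => -c j) hij
    rw [← hπ] at this
    simpa using this
  have hmono : Monovary w (c ∘ π) := hwa.antitone.monovary hanti
  have key : ∀ τ : Equiv.Perm (Fin n),
      cs w c τ = ∑ j, w j * (c ∘ π) ((π⁻¹ * τ) j) := by
    intro τ
    simp [cs]
  have hmax : ∀ σ, cs w c σ ≤ cs w c π := by
    intro σ
    rw [key σ]
    exact hmono.sum_mul_comp_perm_le_sum_mul
  refine ⟨π, hanti, fun τ => ⟨fun h => ?_, fun h σ => ?_⟩⟩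
  · have heq : ∑ j, w j * (c ∘ π) ((π⁻¹ * τ) j) = ∑ j, w j * (c ∘ π) j := by
      rw [← key τ]
      exact le_antisymm (hmax τ) (h π)
    have hm := hmono.sum_mul_comp_perm_eq_sum_mul_iff.1 heq
    have hτ : Monotone ((fun j => -c j) ∘ τ) := by
      intro i j hij
      rcases hij.eq_or_lt with rfl | hlt
      · exact le_rfl
      · by_contra hcon
        have h1 : c (τ i) < c (τ j) := by simpa using hcon
        have h2 := hm (i := i) (j := j) (by simpa using h1)
        exact absurd (hw i j hlt) (not_lt.2 h2)
    have hcomp := Tuple.comp_sort_eq_comp_iff_monotone.2 hτ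
    intro j
    have := congrFun hcomp j
    simpa [← hπ] using this
  · have : cs w c τ = cs w c π := by simp [cs, h]
    rw [this]
    exact hmax σ

theorem stmt6 (n : ℕ) (hn : 2 ≤ n) (a b w : Fin n → ℝ)
    (hwstrict : ∀ i j : Fin n, i < j → w j < w i) (hwpos : ∀ i, 0 < w i)
    (p q : ℝ) (hp : 0 < p) (hq : 0 < q)
    (htie : ∀ s t s' t' : Fin n, s ≠ t → s' ≠ t' →
      p * a s + q * b s = p * a t + q * b t →
      p * a s' + q * b s' = p * a t' + q * b t' →
      ({s, t} : Set (Fin n)) = {s', t'}) :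
    (∃ π : Equiv.Perm (Fin n),
      {τ : Equiv.Perm (Fin n) | ∀ σ, cs w (fun j => p * a j + q * b j) σ ≤
        cs w (fun j => p * a j + q * b j) τ} = {π}) ∨
    (∃ π₁ π₂ : Equiv.Perm (Fin n), π₁ ≠ π₂ ∧
      {τ : Equiv.Perm (Fin n) | ∀ σ, cs w (fun j => p * a j + q * b j) σ ≤
        cs w (fun j => p * a j + q * b j) τ} = {π₁, π₂} ∧
      ∃ (i : ℕ) (hi : i + 1 < n),
        π₂ ⟨i, Nat.lt_of_succ_lt hi⟩ = π₁ ⟨i + 1, hi⟩ ∧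
        π₂ ⟨i + 1, hi⟩ = π₁ ⟨i, Nat.lt_of_succ_lt hi⟩ ∧
        ∀ j : Fin n, j ≠ ⟨i, Nat.lt_of_succ_lt hi⟩ → j ≠ ⟨i + 1, hi⟩ → π₂ j = π₁ j) := by
  obtain ⟨c, hc⟩ : ∃ c : Fin n → ℝ, c = fun j => p * a j + q * b j := ⟨_, rfl⟩
  have htie' : ∀ s t s' t' : Fin n, s ≠ t → s' ≠ t' → c s = c t → c s' = c t' →
      ({s, t} : Set (Fin n)) = {s', t'} := by
    subst hc
    exact htie
  rw [← hc]
  obtain ⟨π, hanti, hM⟩ := exists_sort_maximizers w c hwstrict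
  by_cases hinj : Function.Injective c
  · left
    refine ⟨π, ?_⟩
    ext τ
    simp only [Set.mem_setOf_eq, Set.mem_singleton_iff, hM]
    exact ⟨fun h => Equiv.ext fun j => hinj (h j), fun h j => by rw [h]⟩
  · right
    obtain ⟨x, y, hxy, hcxy⟩ : ∃ x y, x < y ∧ c (π x) = c (π y) := by
      simp only [Function.Injective, not_forall] at hinj
      obtain ⟨s, t, hst, hne⟩ := hinj
      rcases lt_or_gt_of_ne (fun h => hne (π.symm.injective h) : π.symm s ≠ π.symm t) with h | h
      · exact ⟨_, _, h, by simpa using hst⟩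
      · exact ⟨_, _, h, by simpa using hst.symm⟩
    have hpair : ∀ u v, u ≠ v → c u = c v → ({π x, π y} : Set (Fin n)) = {u, v} :=
      fun u v huv h => htie' _ _ _ _ (fun h => hxy.ne (π.injective h)) huv hcxy h
    have hxv : x.val < y.val := hxy
    have hi : x.val + 1 < n := by omega
    have hy : y = ⟨x.val + 1, hi⟩ := by
      by_contra hne
      obtain ⟨z, hz⟩ : ∃ z : Fin n, z = ⟨x.val + 1, hi⟩ := ⟨_, rfl⟩
      rw [← hz] at hne
      have hxz : x < z := by rw [hz, Fin.lt_def]; simp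
      have hzy : z ≤ y := by rw [hz, Fin.le_def]; exact hxv
      have h1 : c (π z) ≤ c (π x) := hanti hxz.le
      have h2 : c (π y) ≤ c (π z) := hanti hzy
      have h3 := hpair (π x) (π z) (fun h => hxz.ne (π.injective h)) (by linarith)
      have h4 : π z ∈ ({π x, π y} : Set (Fin n)) := by rw [h3]; simp
      rcases h4 with h4 | h4
      · exact hxz.ne' (π.injective h4)
      · exact hne (π.injective h4).symm
    have hx : (⟨x.val, Nat.lt_of_succ_lt hi⟩ : Fin n) = x := rfl
    refine ⟨π, π * Equiv.swap x y, ?_, ?_, x.val, hi, ?_, ?_, ?_⟩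
    · intro h
      have := congrArg (fun f : Equiv.Perm (Fin n) => f x) h
      simp at this
      exact hxy.ne this
    · ext τ
      simp only [Set.mem_setOf_eq, Set.mem_insert_iff, Set.mem_singleton_iff, hM]
      constructor
      · intro h
        have hmem : ∀ j, τ j ≠ π j → (j = x ∨ j = y) ∧ (τ j = π x ∨ τ j = π y) := by
          intro j hj
          have h3 := hpair _ _ hj (h j)
          have h4 : π j ∈ ({π x, π y} : Set (Fin n)) := by rw [h3]; simp
          have h5 : τ j ∈ ({π x, π y} : Set (Fin n)) := by rw [h3]; simp
          simpa using And.intro h4 h5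
        have hτ : τ x ≠ τ y := fun h => hxy.ne (τ.injective h)
        by_cases hτx : τ x = π x
        · left
          ext1 j
          by_contra hj
          rcases hmem j hj with ⟨rfl | rfl, h6⟩ <;> grind
        · right
          have hτx' : τ x = π y := by grind
          have hτy' : τ y = π x := by grind
          ext1 j
          by_cases h1 : j = x
          · subst h1; simpa using hτx'
          by_cases h2 : j = y
          · subst h2; simpa using hτy'
          rw [Equiv.Perm.mul_apply, Equiv.swap_apply_of_ne_of_ne h1 h2]
          by_contra hj
          exact (hmem j hj).1.elim h1 h2
      · rintro (rfl | rfl) j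
        · rfl
        · by_cases h1 : j = x
          · subst h1; simpa using hcxy.symm
          by_cases h2 : j = y
          · subst h2; simpa using hcxy
          rw [Equiv.Perm.mul_apply, Equiv.swap_apply_of_ne_of_ne h1 h2]
    · rw [← hy, hx]; simp
    · rw [← hy, hx]; simp
    · intro j h1 h2
      rw [← hy] at h2
      rw [Equiv.Perm.mul_apply, Equiv.swap_apply_of_ne_of_ne h1 h2]
end

section
/- Let n ≥ 1, let a, b ∈ ℝ^n have nonnegative entries, and let w ∈ ℝ^n satisfy w_1 ≥ w_2 ≥ … ≥ w_n ≥ 0. Let f : ℝ² → ℝ be defined on the nonnegative quadrant and let f*(μ,ν) = sup_{α,β ≥ 0} (μα + νβ + f(α,β)). Let p, q ≥ 0 and suppose f*(−p,−q) is finite. Then for any r, c ∈ ℝ^n with nonnegative entries satisfying r_i + c_j ≥ w_i (p·a_j + q·b_j) for all i, j ∈ {1,…,n}, and any permutation π of {1,…,n}: f(cs_w(a,π), cs_w(b,π)) ≤ ∑_{i=1}^n r_i + ∑_{j=1}^n c_j + f*(−p,−q). -/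
/-!
Weak duality. With `α = cs w a π` and `β = cs w b π`, both nonnegative, the definition of the dual
gives `f α β ≤ p * α + q * β + fstar f (-p) (-q)`, and summing the constraints on `r` and `c` along
the graph of `π` bounds `p * α + q * β` by `∑ r + ∑ c`.
-/

open Finset

/-- The set `{μα + νβ + f(α,β) : α, β ≥ 0}` whose supremum is the Fenchel dual
`f*(μ,ν) = sup_{α,β ≥ 0} (μα + νβ + f(α,β))`. -/
def fenchelSet (f : ℝ → ℝ → ℝ) (μ ν : ℝ) : Set ℝ :=
  {z | ∃ α β : ℝ, 0 ≤ α ∧ 0 ≤ β ∧ z = μ * α + ν * β + f α β}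

/-- The Fenchel dual `f*(μ,ν)` (a real number whenever `fenchelSet f μ ν` is bounded above,
i.e. whenever `f*(μ,ν)` is finite). -/
noncomputable def fstar (f : ℝ → ℝ → ℝ) (μ ν : ℝ) : ℝ :=
  sSup (fenchelSet f μ ν)

theorem stmt11 (n : ℕ) (hn : 1 ≤ n) (a b w : Fin n → ℝ)
    (ha : ∀ j, 0 ≤ a j) (hb : ∀ j, 0 ≤ b j)
    (hwmono : ∀ i j : Fin n, i ≤ j → w j ≤ w i) (hw0 : ∀ i, 0 ≤ w i)
    (f : ℝ → ℝ → ℝ) (p q : ℝ) (hp : 0 ≤ p) (hq : 0 ≤ q)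
    (hfin : BddAbove (fenchelSet f (-p) (-q)))
    (r c : Fin n → ℝ) (hr : ∀ i, 0 ≤ r i) (hc : ∀ j, 0 ≤ c j)
    (hconstr : ∀ i j, w i * (p * a j + q * b j) ≤ r i + c j)
    (π : Equiv.Perm (Fin n)) :
    f (cs w a π) (cs w b π) ≤ ∑ i, r i + ∑ j, c j + fstar f (-p) (-q) := by
  have hA : 0 ≤ cs w a π := Finset.sum_nonneg fun j _ => mul_nonneg (hw0 j) (ha _)
  have hB : 0 ≤ cs w b π := Finset.sum_nonneg fun j _ => mul_nonneg (hw0 j) (hb _)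
  have hdual : -p * cs w a π + -q * cs w b π + f (cs w a π) (cs w b π) ≤ fstar f (-p) (-q) :=
    le_csSup hfin ⟨_, _, hA, hB, rfl⟩
  -- Sum the constraints over the pairs `(j, π j)`; reindexing by `π` recovers `∑ j, c j`.
  have hsum : p * cs w a π + q * cs w b π ≤ ∑ i, r i + ∑ j, c j := by
    calc p * cs w a π + q * cs w b π
        = ∑ j, w j * (p * a (π j) + q * b (π j)) := by
          unfold cs
          rw [Finset.mul_sum, Finset.mul_sum, ← Finset.sum_add_distrib]
          exact Finset.sum_congr rfl fun j _ => by ring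
      _ ≤ ∑ j, (r j + c (π j)) := Finset.sum_le_sum fun j _ => hconstr j (π j)
      _ = ∑ i, r i + ∑ j, c j := by
          rw [Finset.sum_add_distrib, Equiv.sum_comp π c]
  linarith
end

section
/- Let n ≥ 2, let a ∈ ℝ^n have nonnegative entries, let w ∈ ℝ^n satisfy w_1 ≥ w_2 ≥ … ≥ w_n ≥ 0, and fix i ∈ {1,…,n−1}. Let π_1 be a permutation of {1,…,n} and let π_2 be the permutation with π_2(i) = π_1(i+1), π_2(i+1) = π_1(i), and π_2(j) = π_1(j) for j ∉ {i,i+1}. Let w' = w + (w_i − w_{i+1}) e_{i+1}, the vector obtained from w by replacing w_{i+1} with w_i. Then cs_{w'}(a,π_1) = cs_{w'}(a,π_2), and for every μ ∈ [0,1]: μ·cs_w(a,π_1) + (1−μ)·cs_w(a,π_2) ≤ cs_{w'}(a,π_1). -/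
/-!
The modified weights agree at `i` and `i + 1`, so they are invariant under the transposition of
these two positions, which carries `π₁` to `π₂`; reindexing the sum gives the equality of scores.
Since `w` is nonincreasing, the modified weights dominate `w` entrywise, so with `a ≥ 0` they
increase the score of every permutation. Both `cs_w(a, π₁)` and `cs_w(a, π₂)` are thus at most the
common value, and so is any convex combination of them.
-/

open Finset

/-- `bump w i h` is `w + (w_i - w_{i+1}) e_{i+1}`, i.e. `w` with entry `i+1` replaced by `w_i`
(0-indexed). -/
def bump {n : ℕ} (w : Fin n → ℝ) (i : ℕ) (h : i + 1 < n) : Fin n → ℝ :=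
  Function.update w ⟨i + 1, h⟩ (w ⟨i, Nat.lt_of_succ_lt h⟩)

theorem stmt12 (n : ℕ) (hn : 2 ≤ n) (a w : Fin n → ℝ) (ha : ∀ j, 0 ≤ a j)
    (hwmono : ∀ i j : Fin n, i ≤ j → w j ≤ w i) (hw0 : ∀ i, 0 ≤ w i)
    (i : ℕ) (hi : i + 1 < n)
    (π₁ π₂ : Equiv.Perm (Fin n))
    (h1 : π₂ ⟨i, Nat.lt_of_succ_lt hi⟩ = π₁ ⟨i + 1, hi⟩)
    (h2 : π₂ ⟨i + 1, hi⟩ = π₁ ⟨i, Nat.lt_of_succ_lt hi⟩)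
    (h3 : ∀ j : Fin n, j ≠ ⟨i, Nat.lt_of_succ_lt hi⟩ → j ≠ ⟨i + 1, hi⟩ → π₂ j = π₁ j) :
    cs (bump w i hi) a π₁ = cs (bump w i hi) a π₂ ∧
    ∀ μ : ℝ, 0 ≤ μ → μ ≤ 1 →
      μ * cs w a π₁ + (1 - μ) * cs w a π₂ ≤ cs (bump w i hi) a π₁ := by
  have hle : ∀ π : Equiv.Perm (Fin n), cs w a π ≤ cs (bump w i hi) a π := by
    intro π
    refine Finset.sum_le_sum fun j _ => mul_le_mul_of_nonneg_right ?_ (ha _)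
    by_cases hj : j = ⟨i + 1, hi⟩
    · subst hj
      simpa [bump] using
        hwmono ⟨i, Nat.lt_of_succ_lt hi⟩ ⟨i + 1, hi⟩ (Fin.mk_le_mk.2 (Nat.le_succ i))
    · simp [bump, hj]
  have heq : cs (bump w i hi) a π₁ = cs (bump w i hi) a π₂ := by
    unfold cs
    rw [← Equiv.sum_comp (Equiv.swap (⟨i, Nat.lt_of_succ_lt hi⟩ : Fin n) ⟨i + 1, hi⟩)]
    refine Finset.sum_congr rfl fun j _ => ?_
    by_cases hj : j = ⟨i, Nat.lt_of_succ_lt hi⟩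
    · subst hj
      simp [bump, h1]
    · by_cases hj' : j = ⟨i + 1, hi⟩
      · subst hj'
        simp [bump, h2]
      · rw [Equiv.swap_apply_of_ne_of_ne hj hj', h3 j hj hj']
  refine ⟨heq, fun μ hμ0 hμ1 => ?_⟩
  have hle₁ := mul_le_mul_of_nonneg_left (hle π₁) hμ0
  have hle₂ := mul_le_mul_of_nonneg_left (hle π₂) (sub_nonneg.2 hμ1)
  rw [← heq] at hle₂
  linarith
end

section
/- Let m, n ≥ 1; for each i ∈ {1,…,m} let w_i ∈ ℝ^n satisfy w_{i1} ≥ w_{i2} ≥ … ≥ w_{in} ≥ 0 and let d_i ∈ ℝ^n have nonnegative entries. Then the minimum of ∑_{i=1}^m (∑_{j=1}^n r_{ij} + ∑_{k=1}^n c_{ik}) over all nonnegative reals r_{ij}, c_{ik} satisfying r_{ij} + c_{ik} ≥ w_{ij} d_{ik} for all i ∈ {1,…,m} and j, k ∈ {1,…,n} equals ∑_{i=1}^m max_π ∑_{j=1}^n w_{ij} d_{i,π(j)}, where each maximum is over permutations π of {1,…,n}. -/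
open Finset

/-!
The program splits over the instances. For one instance, summing `w j * d (π j) ≤ r j + c (π j)`
over `j` shows that every dual feasible value dominates every cumulative score (`weak_duality`).
It therefore suffices to exhibit a permutation `σ` and a feasible `(r, c)` that is tight along `σ`
(`exists_tight`): this certifies both that `σ` is optimal and that `(r, c)` is.

Let `σ` sort `d` decreasingly, and put `a = w`, `b = d ∘ σ`, both antitone and nonnegative. With
`P j = ∑_{l < j} (a l - a (l + 1)) * b l`, the choice `r j = P n - P j`, `c j = a j * b j - r j`
works, because for `j ≤ k` the increment `P k - P j` is an average of values of `b` on `[j, k]`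
times `a j - a k`, so it lies between `(a j - a k) * b k` and `(a j - a k) * b j`
(`potential_bounds`).
-/

/-- The discrete Stieltjes sum `-∑ b Δa` over `l < j`. -/
noncomputable def potential (a b : ℕ → ℝ) (j : ℕ) : ℝ :=
  ∑ l ∈ range j, (a l - a (l + 1)) * b l

lemma potential_bounds {a b : ℕ → ℝ} (ha : Antitone a) (hb : Antitone b) {j k : ℕ} (h : j ≤ k) :
    (a j - a k) * b k ≤ potential a b k - potential a b j ∧
      potential a b k - potential a b j ≤ (a j - a k) * b j := by
  induction k, h using Nat.le_induction with
  | base => simp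
  | succ k hk ih =>
    have hstep : potential a b (k + 1) = potential a b k + (a k - a (k + 1)) * b k :=
      sum_range_succ _ _
    have h1 := ha hk
    have h2 := ha (Nat.le_succ k)
    have h3 := hb hk
    have h4 := hb (Nat.le_succ k)
    simp only [Nat.succ_eq_add_one] at h2 h4
    rw [hstep]
    constructor
    · nlinarith [mul_nonneg (sub_nonneg.2 h1) (sub_nonneg.2 h4),
        mul_nonneg (sub_nonneg.2 h2) (sub_nonneg.2 h4)]
    · nlinarith [mul_nonneg (sub_nonneg.2 h2) (sub_nonneg.2 h3)]

/-- Extension of a finite sequence by zero; it stays antitone when the sequence is antitone and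
nonnegative. -/
noncomputable def extendZero {n : ℕ} (f : Fin n → ℝ) (l : ℕ) : ℝ :=
  if h : l < n then f ⟨l, h⟩ else 0

lemma extendZero_coe {n : ℕ} (f : Fin n → ℝ) (j : Fin n) : extendZero f j = f j := by
  simp [extendZero]

lemma extendZero_nonneg {n : ℕ} {f : Fin n → ℝ} (h0 : ∀ j, 0 ≤ f j) (l : ℕ) :
    0 ≤ extendZero f l := by
  unfold extendZero
  split_ifs
  · exact h0 _
  · exact le_rfl

lemma extendZero_antitone {n : ℕ} {f : Fin n → ℝ} (hf : Antitone f) (h0 : ∀ j, 0 ≤ f j) :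
    Antitone (extendZero f) := by
  intro k l hkl
  by_cases hl : l < n
  · have hk : k < n := hkl.trans_lt hl
    simp only [extendZero, hl, hk, dif_pos]
    exact hf hkl
  · have : extendZero f l = 0 := by simp [extendZero, hl]
    rw [this]
    exact extendZero_nonneg h0 k

/-- When both sequences are sorted decreasingly, the identity assignment has a tight dual
certificate. -/
lemma exists_tight_sorted {n : ℕ} {f g : Fin n → ℝ} (hf : Antitone f) (hg : Antitone g)
    (hf0 : ∀ j, 0 ≤ f j) (hg0 : ∀ j, 0 ≤ g j) :
    ∃ r c : Fin n → ℝ, (∀ j, 0 ≤ r j) ∧ (∀ k, 0 ≤ c k) ∧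
      (∀ j k, f j * g k ≤ r j + c k) ∧ ∀ j, r j + c j = f j * g j := by
  have ha := extendZero_antitone hf hf0
  have hb := extendZero_antitone hg hg0
  let P := potential (extendZero f) (extendZero g)
  refine ⟨fun j => P n - P j, fun j => f j * g j - (P n - P j), fun j => ?_, fun j => ?_,
    fun j k => ?_, fun j => by ring⟩
  · exact (mul_nonneg (sub_nonneg.2 (ha j.2.le)) (extendZero_nonneg hg0 n)).trans
      (potential_bounds ha hb j.2.le).1
  · have h := (potential_bounds ha hb j.2.le).2
    have h' := mul_nonneg (extendZero_nonneg hf0 n) (hg0 j)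
    simp only [extendZero_coe] at h
    simp only [P]
    linarith
  · simp only [P]
    rcases le_total j k with hjk | hkj
    · have h := (potential_bounds ha hb (Fin.le_def.1 hjk)).1
      simp only [extendZero_coe] at h
      linarith
    · have h := (potential_bounds ha hb (Fin.le_def.1 hkj)).2
      simp only [extendZero_coe] at h
      linarith

lemma exists_tight {n : ℕ} {w d : Fin n → ℝ} (hw : Antitone w)
    (hw0 : ∀ j, 0 ≤ w j) (hd : ∀ j, 0 ≤ d j) :
    ∃ (σ : Equiv.Perm (Fin n)) (r c : Fin n → ℝ), (∀ j, 0 ≤ r j) ∧ (∀ k, 0 ≤ c k) ∧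
      (∀ j k, w j * d k ≤ r j + c k) ∧ ∑ j, r j + ∑ k, c k = ∑ j, w j * d (σ j) := by
  -- `Tuple.sort` sorts increasingly, hence the negation.
  let σ := Tuple.sort (fun j => -d j)
  have hσ : Antitone (d ∘ σ) := fun j k hjk =>
    neg_le_neg_iff.1 (Tuple.monotone_sort (fun j => -d j) hjk)
  obtain ⟨r, c, hr, hc, hrc, ht⟩ := exists_tight_sorted hw hσ hw0 (fun j => hd (σ j))
  refine ⟨σ, r, c ∘ σ.symm, hr, fun k => hc _, fun j k => ?_, ?_⟩
  · simpa using hrc j (σ.symm k)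
  · have h : ∑ k, (c ∘ σ.symm) k = ∑ k, c k := Equiv.sum_comp σ.symm c
    rw [h, ← sum_add_distrib]
    exact sum_congr rfl fun j _ => ht j

lemma weak_duality {n : ℕ} {w d r c : Fin n → ℝ} (h : ∀ j k, w j * d k ≤ r j + c k)
    (π : Equiv.Perm (Fin n)) : ∑ j, w j * d (π j) ≤ ∑ j, r j + ∑ k, c k := by
  rw [← Equiv.sum_comp π c, ← sum_add_distrib]
  exact sum_le_sum fun j _ => h j (π j)

theorem stmt15 (m n : ℕ) (hm : 1 ≤ m) (hn : 1 ≤ n)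
    (w d : Fin m → Fin n → ℝ)
    (hwmono : ∀ (i : Fin m) (j k : Fin n), j ≤ k → w i k ≤ w i j)
    (hw0 : ∀ i j, 0 ≤ w i j) (hd : ∀ i j, 0 ≤ d i j) :
    ∃ v : Fin m → ℝ,
      (∀ i : Fin m,
        IsGreatest {x : ℝ | ∃ π : Equiv.Perm (Fin n), x = ∑ j, w i j * d i (π j)} (v i)) ∧
      IsLeast {x : ℝ | ∃ r c : Fin m → Fin n → ℝ,
        (∀ i j, 0 ≤ r i j) ∧ (∀ i k, 0 ≤ c i k) ∧
        (∀ i j k, w i j * d i k ≤ r i j + c i k) ∧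
        x = ∑ i, (∑ j, r i j + ∑ k, c i k)} (∑ i, v i) := by
  choose σ r c hr hc hrc ht using fun i =>
    exists_tight (w := w i) (d := d i) (hwmono i) (hw0 i) (hd i)
  refine ⟨fun i => ∑ j, w i j * d i (σ i j), fun i => ⟨⟨σ i, rfl⟩, ?_⟩,
    ⟨r, c, hr, hc, hrc, sum_congr rfl fun i _ => (ht i).symm⟩, ?_⟩
  · rintro x ⟨π, rfl⟩
    exact (weak_duality (hrc i) π).trans_eq (ht i)
  · rintro x ⟨r', c', -, -, h, rfl⟩
    exact sum_le_sum fun i _ => weak_duality (h i) (σ i)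
end

section
/- Let m, n ≥ 1; for each i ∈ {1,…,m} let a_i, b_i ∈ ℝ^n have nonnegative entries and let w_i ∈ ℝ^n satisfy w_{i1} ≥ … ≥ w_{in} ≥ 0. Let f_1,…,f_m, F : ℝ² → ℝ be defined on the nonnegative quadrant with Fenchel duals f_i*(μ,ν) = sup_{α,β ≥ 0}(μα + νβ + f_i(α,β)) and F*(μ,ν) = sup_{α,β ≥ 0}(μα + νβ + F(α,β)). Let p, q, p_1, q_1, …, p_m, q_m ≥ 0 be such that F*(−p,−q) and every f_i*(−p_i,−q_i) are finite, and let nonnegative reals r_{ij}, c_{ik} satisfy r_{ij} + c_{ik} ≥ w_{ij}((p_i + p)·a_{ik} + (q_i + q)·b_{ik}) for all i, j, k. Then for any permutations π_1,…,π_m of {1,…,n}: F(∑_{i=1}^m cs_{w_i}(a_i,π_i), ∑_{i=1}^m cs_{w_i}(b_i,π_i)) + ∑_{i=1}^m f_i(cs_{w_i}(a_i,π_i), cs_{w_i}(b_i,π_i)) ≤ ∑_{i=1}^m (∑_{j=1}^n r_{ij} + ∑_{k=1}^n c_{ik} + f_i*(−p_i,−q_i)) + F*(−p,−q). -/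
/-!
Weak duality. By definition of the supremum, `f α β ≤ f*(-μ,-ν) + μ α + ν β` for `α, β ≥ 0`
(`le_fstar_add`). Applying this to `F` and to each `f i` at the cumulative scores leaves the linear
terms `(pv i + p) * cs (w i) (a i) (π i) + (qv i + q) * cs (w i) (b i) (π i)`. Summing the dual
constraints along the matching `k = π i j` bounds these by `∑ j, r i j + ∑ k, c i k`, because a
permutation hits every `k` exactly once (`cs_combination_le`).
-/

open Finset

/-- The Fenchel–Young inequality for `fstar`. -/
lemma le_fstar_add (f : ℝ → ℝ → ℝ) (μ ν α β : ℝ) (hα : 0 ≤ α) (hβ : 0 ≤ β)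
    (h : BddAbove (fenchelSet f (-μ) (-ν))) :
    f α β ≤ fstar f (-μ) (-ν) + μ * α + ν * β := by
  have h1 : -μ * α + -ν * β + f α β ≤ fstar f (-μ) (-ν) :=
    le_csSup h ⟨α, β, hα, hβ, rfl⟩
  linarith

lemma cs_nonneg {n : ℕ} (w a : Fin n → ℝ) (π : Equiv.Perm (Fin n))
    (hw : ∀ j, 0 ≤ w j) (ha : ∀ j, 0 ≤ a j) : 0 ≤ cs w a π :=
  Finset.sum_nonneg fun j _ => mul_nonneg (hw j) (ha _)

/-- Weak duality for the assignment problem with rewards `w j * (s * a k + t * b k)`: the value of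
the assignment `π` is at most the value of any dual feasible pair `(r, c)`. -/
lemma cs_combination_le {n : ℕ} (w a b r c : Fin n → ℝ) (s t : ℝ) (π : Equiv.Perm (Fin n))
    (h : ∀ j k, w j * (s * a k + t * b k) ≤ r j + c k) :
    s * cs w a π + t * cs w b π ≤ ∑ j, r j + ∑ k, c k := by
  rw [← Equiv.sum_comp π c, ← Finset.sum_add_distrib]
  simp only [cs, Finset.mul_sum]
  rw [← Finset.sum_add_distrib]
  refine Finset.sum_le_sum fun j _ => ?_
  have := h j (π j)
  linarith

theorem stmt16 (m n : ℕ) (hm : 1 ≤ m) (hn : 1 ≤ n)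
    (a b w : Fin m → Fin n → ℝ)
    (ha : ∀ i k, 0 ≤ a i k) (hb : ∀ i k, 0 ≤ b i k)
    (hwmono : ∀ (i : Fin m) (j k : Fin n), j ≤ k → w i k ≤ w i j)
    (hw0 : ∀ i j, 0 ≤ w i j)
    (f : Fin m → ℝ → ℝ → ℝ) (F : ℝ → ℝ → ℝ)
    (p q : ℝ) (pv qv : Fin m → ℝ)
    (hp : 0 ≤ p) (hq : 0 ≤ q) (hpv : ∀ i, 0 ≤ pv i) (hqv : ∀ i, 0 ≤ qv i)
    (hFfin : BddAbove (fenchelSet F (-p) (-q)))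
    (hffin : ∀ i, BddAbove (fenchelSet (f i) (-(pv i)) (-(qv i))))
    (r c : Fin m → Fin n → ℝ)
    (hr : ∀ i j, 0 ≤ r i j) (hc : ∀ i k, 0 ≤ c i k)
    (hconstr : ∀ i j k,
      w i j * ((pv i + p) * a i k + (qv i + q) * b i k) ≤ r i j + c i k)
    (π : Fin m → Equiv.Perm (Fin n)) :
    F (∑ i, cs (w i) (a i) (π i)) (∑ i, cs (w i) (b i) (π i)) +
        ∑ i, f i (cs (w i) (a i) (π i)) (cs (w i) (b i) (π i)) ≤
      ∑ i, (∑ j, r i j + ∑ k, c i k + fstar (f i) (-(pv i)) (-(qv i))) +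
        fstar F (-p) (-q) := by
  have hA i : 0 ≤ cs (w i) (a i) (π i) := cs_nonneg _ _ _ (hw0 i) (ha i)
  have hB i : 0 ≤ cs (w i) (b i) (π i) := cs_nonneg _ _ _ (hw0 i) (hb i)
  have hF := le_fstar_add F p q (∑ i, cs (w i) (a i) (π i))
    (∑ i, cs (w i) (b i) (π i)) (Finset.sum_nonneg fun i _ => hA i)
    (Finset.sum_nonneg fun i _ => hB i) hFfin
  have hS : ∑ i, (f i (cs (w i) (a i) (π i)) (cs (w i) (b i) (π i)) +
        (p * cs (w i) (a i) (π i) + q * cs (w i) (b i) (π i))) ≤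
      ∑ i, (∑ j, r i j + ∑ k, c i k + fstar (f i) (-(pv i)) (-(qv i))) := by
    refine Finset.sum_le_sum fun i _ => ?_
    have h1 := le_fstar_add (f i) (pv i) (qv i) _ _ (hA i) (hB i) (hffin i)
    have h2 := cs_combination_le (w i) (a i) (b i) (r i) (c i) (pv i + p) (qv i + q) (π i)
      (hconstr i)
    linarith
  rw [Finset.sum_add_distrib, Finset.sum_add_distrib, ← Finset.mul_sum, ← Finset.mul_sum] at hS
  linarith
end
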